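/- Let G be a finite group and let N be a minimal normal subgroup of G isomorphic to a direct product of k copies of the alternating group A5. Then the number of irreducible complex characters χ of G with χ(1) = 3 whose kernel does not contain N is at most 2k times the number of linear characters of G; that is, n_3(G|N) ≤ 2k · n_1(G). -/

import Mathlib

open CategoryTheory

/-- The set of irreducible complex characters of `G`: characters of simple
finite-dimensional complex representations of `G`. -/
noncomputable def IrrChar (G : Type) [Group G] : Set (G → ℂ) :=
  {χ | ∃ V : FDRep ℂ G, Simple V ∧ χ = fun g => V.character g}

/-- The degree of a character, read off from its value at `1`. -/
noncomputable def charDeg {G : Type} [Group G] (χ : G → ℂ) : ℕ :=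
  ⌊(χ 1).re⌋₊

/-- The average degree of the irreducible characters of `G` satisfying a
predicate `p` (with the convention that the average of the empty set is `0`). -/
noncomputable def acdRel (G : Type) [Group G] (p : (G → ℂ) → Prop) : ℝ :=
  (∑ᶠ χ ∈ {χ ∈ IrrChar G | p χ}, (charDeg χ : ℝ)) /
    ({χ ∈ IrrChar G | p χ} : Set (G → ℂ)).ncard

/-- The average character degree of `G`. -/
noncomputable def acd (G : Type) [Group G] : ℝ := acdRel G fun _ => True

/-!
A three-dimensional representation of `G` that is nontrivial on `N ≅ A₅ᵏ` is nontrivial on some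
factor `A₅`. There it has determinant one and every element is conjugate to its inverse, so its
eigenvalues at `g` are `1, z, z⁻¹`; this forces the character values `3, -1, 0, t, 1 - t` on the
five classes, with `t ^ 2 = t + 1`. Such a character has norm one, so the factor acts irreducibly,
and by Schur's lemma the other factors, which commute with it and are perfect, act trivially. Hence
the restriction to `N` is one of at most `2k` irreducible characters. By Schur's lemma again, two
representations of `G` with the same irreducible restriction to `N` differ by a linear character.
-/

section LinearAlgebra

open Polynomial

variable {R K V : Type*} [CommRing R] [Field K] [AddCommGroup V] [Module K V]

lemma charpoly_fin_three (M : Matrix (Fin 3) (Fin 3) R) :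
    M.charpoly = X ^ 3 - C M.trace * X ^ 2 + C M.adjugate.trace * X - C M.det := by
  simp only [Matrix.charpoly, Matrix.det_fin_three, Matrix.trace_fin_three,
    Matrix.adjugate_fin_three, Matrix.charmatrix_apply, Matrix.diagonal_apply, Matrix.of_apply,
    Matrix.cons_val', Matrix.cons_val, Fin.reduceEq, reduceIte, map_add, map_sub, map_mul]
  ring

lemma trace_sq_fin_three (M : Matrix (Fin 3) (Fin 3) R) :
    (M ^ 2).trace = M.trace ^ 2 - 2 * M.adjugate.trace := by
  simp only [sq, Matrix.trace_fin_three, Matrix.adjugate_fin_three, Matrix.mul_apply,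
    Fin.sum_univ_three, Matrix.of_apply, Matrix.cons_val', Matrix.cons_val]
  ring

lemma adjugate_eq_det_smul_of_mul_eq_one {n : Type*} [Fintype n] [DecidableEq n]
    {M P : Matrix n n R} (h : M * P = 1) : M.adjugate = M.det • P := by
  rw [← mul_one M.adjugate, ← h, ← mul_assoc, Matrix.adjugate_mul, smul_one_mul]

lemma trace_eq_det_of_finrank_eq_one (hV : Module.finrank K V = 1) (f : Module.End K V) :
    LinearMap.trace K V f = LinearMap.det f := by
  have : FiniteDimensional K V := FiniteDimensional.of_finrank_eq_succ hV
  obtain ⟨c, rfl, -⟩ := LinearMap.existsUnique_eq_smul_id_of_finrank_eq_one hV f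
  simp [hV]

variable {f f' : Module.End K V}

lemma eq_one_of_pow_eq_one_of_isNilpotent_sub_one {n : ℕ} (hn : (n : K) ≠ 0) (hf : f ^ n = 1)
    (hnil : IsNilpotent (f - 1)) : f = 1 := by
  have hsemisimple : f.IsSemisimple :=
    Module.End.isSemisimple_of_squarefree_aeval_eq_zero
      (X_pow_sub_one_separable_iff.2 hn).squarefree (by simp [hf])
  rw [← sub_eq_zero]
  refine Module.End.eq_zero_of_isNilpotent_isSemisimple hnil ?_
  simpa using (Module.End.isSemisimple_sub_algebraMap_iff (μ := (1 : K))).2 hsemisimple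

lemma pow_eq_one_of_hasEigenvalue {n : ℕ} {z : K} (hf : f ^ n = 1) (hz : f.HasEigenvalue z) :
    z ^ n = 1 := by
  obtain ⟨v, hv⟩ := hz.exists_hasEigenvector
  refine smul_left_injective K hv.2 ?_
  simpa [hf] using (hv.pow_apply n).symm

variable [FiniteDimensional K V]

lemma charpoly_eq_of_finrank_eq_three (hV : Module.finrank K V = 3) (h : f * f' = 1) :
    f.charpoly = X ^ 3 - C (LinearMap.trace K V f) * X ^ 2 +
      C (LinearMap.det f * LinearMap.trace K V f') * X - C (LinearMap.det f) := by
  let b := Module.finBasisOfFinrankEq K V hV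
  have hM : LinearMap.toMatrix b b f * LinearMap.toMatrix b b f' = 1 := by
    rw [← LinearMap.toMatrix_mul, h, LinearMap.toMatrix_one]
  rw [← LinearMap.charpoly_toMatrix f b, charpoly_fin_three,
    adjugate_eq_det_smul_of_mul_eq_one hM, Matrix.trace_smul, smul_eq_mul, LinearMap.det_toMatrix,
    ← LinearMap.trace_eq_matrix_trace, ← LinearMap.trace_eq_matrix_trace]

lemma trace_sq_of_finrank_eq_three (hV : Module.finrank K V = 3) (h : f * f' = 1) :
    LinearMap.trace K V (f ^ 2) =
      LinearMap.trace K V f ^ 2 - 2 * (LinearMap.det f * LinearMap.trace K V f') := by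
  let b := Module.finBasisOfFinrankEq K V hV
  have hM : LinearMap.toMatrix b b f * LinearMap.toMatrix b b f' = 1 := by
    rw [← LinearMap.toMatrix_mul, h, LinearMap.toMatrix_one]
  rw [LinearMap.trace_eq_matrix_trace K b, sq, LinearMap.toMatrix_mul, ← sq, trace_sq_fin_three,
    adjugate_eq_det_smul_of_mul_eq_one hM, Matrix.trace_smul, smul_eq_mul, LinearMap.det_toMatrix,
    ← LinearMap.trace_eq_matrix_trace, ← LinearMap.trace_eq_matrix_trace]

lemma exists_eq_one_add_add_inv_of_charpoly_eq [IsAlgClosed K] {t : K} {n : ℕ}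
    (hcharpoly : f.charpoly = (X - 1) * (X ^ 2 - C (t - 1) * X + 1))
    (hn : (n : K) ≠ 0) (hf : f ^ n = 1) (hf1 : f ≠ 1) :
    ∃ z : K, z ^ n = 1 ∧ z ≠ 1 ∧ t = 1 + z + z⁻¹ := by
  obtain ⟨z, hz⟩ := IsAlgClosed.exists_root (X ^ 2 - C (t - 1) * X + 1 : K[X])
    (by rw [show (X ^ 2 - C (t - 1) * X + 1 : K[X]).degree = 2 by compute_degree!]; decide)
  have hquad : z ^ 2 - (t - 1) * z + 1 = 0 := by simpa using hz
  have hroot : f.charpoly.IsRoot z := by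
    rw [hcharpoly]
    exact root_mul_left_of_isRoot _ hz
  have hz0 : z ≠ 0 := by rintro rfl; simp at hquad
  refine ⟨z, pow_eq_one_of_hasEigenvalue hf
    ((Module.End.hasEigenvalue_iff_isRoot_charpoly f z).2 hroot), ?_, ?_⟩
  · rintro rfl
    have hcube : f.charpoly = (X - 1) ^ 3 := by
      rw [hcharpoly, show t - 1 = 2 by linear_combination -hquad, C_ofNat]
      ring
    refine hf1 (eq_one_of_pow_eq_one_of_isNilpotent_sub_one hn hf ⟨3, ?_⟩)
    simpa [hcube] using LinearMap.aeval_self_charpoly f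
  · field_simp
    linear_combination -hquad

end LinearAlgebra

section Groups

lemma eq_one_of_commute {G M : Type*} [Group G] [Group.IsPerfect G] [Monoid M] (f : G →* M)
    (h : ∀ a b, Commute (f a) (f b)) : f = 1 := by
  have hker : commutator G ≤ f.toHomUnits.ker := by
    rw [commutator_def, Subgroup.commutator_le]
    intro a _ b _
    rw [MonoidHom.mem_ker, map_commutatorElement, commutatorElement_eq_one_iff_mul_comm]
    exact Units.ext (h a b)
  rw [Group.IsPerfect.commutator_eq_top, top_le_iff, MonoidHom.ker_eq_top_iff] at hker
  exact MonoidHom.ext fun g => congrArg Units.val (DFunLike.congr_fun hker g)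

lemma eq_one_of_map_eq_one {G M : Type*} [Group G] [IsSimpleGroup G] [Monoid M] {f : G →* M}
    (hf : f ≠ 1) {g : G} (hg : f g = 1) : g = 1 := by
  have hker : f.ker ≠ ⊤ := fun h => hf (MonoidHom.ker_eq_top_iff.1 h)
  have hbot := (inferInstance : f.ker.Normal).eq_bot_or_eq_top.resolve_right hker
  rwa [← MonoidHom.mem_ker, hbot, Subgroup.mem_bot] at hg

lemma eq_comp_evalMonoidHom {ι M : Type*} {S : ι → Type*} [Finite ι] [DecidableEq ι]
    [∀ i, Group (S i)] [∀ i, Group.IsPerfect (S i)] [Monoid M] (f : (∀ i, S i) →* M) (i : ι)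
    (hcentralizer : ∀ x y, (∀ a, Commute x (f (Pi.mulSingle i a))) →
      (∀ a, Commute y (f (Pi.mulSingle i a))) → Commute x y) :
    f = (f.comp (MonoidHom.mulSingle S i)).comp (Pi.evalMonoidHom S i) := by
  refine MonoidHom.pi_ext fun j a => ?_
  rcases eq_or_ne j i with rfl | hji
  · simp
  have hcomm (b : S j) (c : S i) : Commute (f (Pi.mulSingle j b)) (f (Pi.mulSingle i c)) :=
    (Pi.mulSingle_commute hji b c).map f
  have htrivial : f.comp (MonoidHom.mulSingle S j) = 1 :=
    eq_one_of_commute _ fun b c => hcentralizer _ _ (hcomm b) (hcomm c)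
  simpa [Pi.mulSingle_eq_of_ne hji.symm] using DFunLike.congr_fun htrivial a

lemma exists_comp_mulSingle_ne_one {ι M : Type*} {S : ι → Type*} [Finite ι] [DecidableEq ι]
    [∀ i, Group (S i)] [Monoid M] {f : (∀ i, S i) →* M} (hf : f ≠ 1) :
    ∃ i, f.comp (MonoidHom.mulSingle S i) ≠ 1 := by
  contrapose! hf
  exact MonoidHom.pi_ext fun i a => DFunLike.congr_fun (hf i) a

end Groups

section Representations

universe u

section Twisting

variable {k A G : Type*} [Field k] [Ring A] [Algebra k A] [Group G]

lemma smul_map_injective [Nontrivial A] (ρ : G →* A) (g : G) :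
    Function.Injective fun c : k => c • ρ g := by
  have hg : ρ g ≠ 0 := ((Group.isUnit g).map ρ).ne_zero
  exact smul_left_injective k hg

lemma commute_mul_map_inv {M : Type*} [Monoid M] {ρ σ : G →* M} {N : Subgroup G} [N.Normal]
    (hσρ : Set.EqOn σ ρ N) (g : G) {n : G} (hn : n ∈ N) :
    Commute (σ g * ρ g⁻¹) (ρ n) := by
  have hconj : g⁻¹ * n * g ∈ N := by
    simpa using (inferInstance : N.Normal).conj_mem n hn g⁻¹
  calc σ g * ρ g⁻¹ * ρ n = σ g * ρ (g⁻¹ * n * g) * ρ g⁻¹ := by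
        simp only [mul_assoc, ← map_mul, mul_inv_cancel, mul_one]
    _ = σ n * (σ g * ρ g⁻¹) := by
        rw [← hσρ hconj, ← map_mul, mul_assoc g⁻¹, mul_inv_cancel_left, map_mul, mul_assoc]
    _ = ρ n * (σ g * ρ g⁻¹) := by rw [hσρ hn]

lemma exists_eq_smul_of_eqOn [Nontrivial A] {ρ σ : G →* A} {N : Subgroup G} [N.Normal]
    (hσρ : Set.EqOn σ ρ N)
    (hcentralizer : ∀ T : A, (∀ n ∈ N, Commute T (ρ n)) → ∃ c : k, T = c • 1) :
    ∃ l : G →* k, ∀ g, σ g = l g • ρ g := by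
  choose l hl using fun g => hcentralizer (σ g * ρ g⁻¹) fun n hn => commute_mul_map_inv hσρ g hn
  have hσ (g : G) : σ g = l g • ρ g := by
    rw [← one_mul (ρ g), ← smul_mul_assoc, ← hl, mul_assoc, ← map_mul, inv_mul_cancel, map_one,
      mul_one]
  refine ⟨⟨⟨l, smul_map_injective ρ 1 ?_⟩, fun a b => smul_map_injective ρ (a * b) ?_⟩, hσ⟩
  · exact (hσ 1).symm.trans (by simp)
  · exact (hσ (a * b)).symm.trans (by
      rw [map_mul, map_mul, hσ a, hσ b, smul_mul_smul_comm])

end Twisting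

section OneDimensional

lemma simple_of_simple_obj {C D : Type*} [Category C] [Category D] [Limits.HasZeroMorphisms C]
    [Limits.HasZeroMorphisms D] (F : C ⥤ D) [F.PreservesZeroMorphisms] [F.PreservesMonomorphisms]
    [F.ReflectsIsomorphisms] [F.Faithful] {X : C} [Simple (F.obj X)] : Simple X where
  mono_isIso_iff_nonzero f _ := by
    rw [← isIso_iff_of_reflects_iso f F, Simple.mono_isIso_iff_nonzero, Ne, F.map_eq_zero_iff]

lemma simple_fdRep_of_finrank_eq_one {k G V : Type u} [Field k] [Group G] [AddCommGroup V]
    [Module k V] [FiniteDimensional k V] (ρ : Representation k G V)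
    (hV : Module.finrank k V = 1) : Simple (FDRep.of ρ) := by
  let F : FDRep k G ⥤ ModuleCat k :=
    Action.forget (FGModuleCat k) G ⋙ forget₂ (FGModuleCat k) (ModuleCat k)
  have : Simple (F.obj (FDRep.of ρ)) := simple_of_finrank_eq_one (V := .of k V) hV
  exact simple_of_simple_obj F

end OneDimensional

section Schur

variable {k G V : Type u} [Field k] [Group G] [AddCommGroup V] [Module k V]
  [FiniteDimensional k V]

lemma nontrivial_of_simple (ρ : Representation k G V) [Simple (FDRep.of ρ)] : Nontrivial V := by
  by_contra! hV
  refine id_nonzero (FDRep.of ρ) ?_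
  ext v
  exact Subsingleton.elim (α := V) _ _

variable [IsAlgClosed k] {ρ : Representation k G V}

lemma exists_eq_smul_one_of_simple [Simple (FDRep.of ρ)] {T : Module.End k V}
    (hT : ∀ g, Commute T (ρ g)) : ∃ c : k, T = c • 1 := by
  let F : FDRep.of ρ ⟶ FDRep.of ρ :=
    ⟨InducedCategory.homMk (ModuleCat.ofHom T), fun g => by ext1; exact hT g⟩
  obtain ⟨c, hc⟩ := endomorphism_simple_eq_smul_id k F
  exact ⟨c, congrArg (fun F : FDRep.of ρ ⟶ FDRep.of ρ => F.hom.hom.hom) hc.symm⟩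

lemma finrank_eq_one_of_simple_one [Simple (FDRep.of (1 : Representation k G V))] :
    Module.finrank k V = 1 := by
  have := nontrivial_of_simple (1 : Representation k G V)
  have hscalar (T : Module.End k V) : ∃ c : k, c • 1 = T :=
    (exists_eq_smul_one_of_simple (ρ := (1 : Representation k G V))
      fun _ => Commute.one_right T).imp fun _ => Eq.symm
  have hend := (finrank_eq_one_iff_of_nonzero' (1 : Module.End k V) one_ne_zero).2 hscalar
  rw [Module.finrank_linearMap] at hend
  exact Nat.eq_one_of_mul_eq_one_right hend

lemma simple_of_forall_exists_eq_smul_one [Nontrivial V] [Finite G] [NeZero (Nat.card G : k)]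
    (h : ∀ T : Module.End k V, (∀ g, Commute T (ρ g)) → ∃ c : k, T = c • 1) :
    Simple (FDRep.of ρ) := by
  rw [FDRep.simple_iff_end_is_rank_one]
  have hid : 𝟙 (FDRep.of ρ) ≠ 0 := fun h0 =>
    one_ne_zero (α := Module.End k V)
      (congrArg (fun F : FDRep.of ρ ⟶ FDRep.of ρ => F.hom.hom.hom) h0)
  refine (finrank_eq_one_iff_of_nonzero' _ hid).2 fun F => ?_
  obtain ⟨c, hc⟩ := h F.hom.hom.hom fun g =>
    congrArg (fun f : (FDRep.of ρ).V ⟶ (FDRep.of ρ).V => f.hom.hom) (F.comm g)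
  refine ⟨c, ?_⟩
  ext v
  exact (LinearMap.congr_fun hc v).symm

lemma simple_comp_of_surjective {H : Type u} [Group H] [Finite H] [NeZero (Nat.card H : k)]
    [Simple (FDRep.of ρ)] {f : H →* G} (hf : Function.Surjective f) :
    Simple (FDRep.of (ρ.comp f)) :=
  have := nontrivial_of_simple ρ
  simple_of_forall_exists_eq_smul_one fun _ hT =>
    exists_eq_smul_one_of_simple (hf.forall.2 hT)

end Schur

section Characters

variable {k G : Type u} [Field k] [IsAlgClosed k] [CharZero k] [Group G]

section FiniteGroup

variable [Finite G]

lemma simple_of_character_eq {V W : FDRep k G} [Simple V] (h : V.character = W.character) :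
    Simple W := by
  have := Fintype.ofFinite G
  rw [FDRep.simple_iff_char_is_norm_one, ← h, ← FDRep.simple_iff_char_is_norm_one]
  assumption

lemma nonempty_iso_of_character_eq {V W : FDRep k G} [Simple V] (h : V.character = W.character) :
    Nonempty (V ≅ W) := by
  have := Fintype.ofFinite G
  have := invertibleOfNonzero (NeZero.ne (Nat.card G : k))
  have := simple_of_character_eq h
  have hVW := FDRep.char_orthonormal V W
  by_contra hempty
  rw [← h, FDRep.char_orthonormal V V, if_pos ⟨Iso.refl V⟩, if_neg hempty] at hVW
  exact one_ne_zero hVW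

end FiniteGroup

lemma exists_character_eq_mul {N : Subgroup G} [N.Normal] {V W : FDRep k G}
    [Finite N] [Simple (FDRep.of (V.ρ.comp N.subtype))]
    (h : Set.EqOn V.character W.character N) :
    ∃ l : G →* k, ∀ g, W.character g = l g * V.character g := by
  have := nontrivial_of_simple (V.ρ.comp N.subtype)
  obtain ⟨i⟩ := nonempty_iso_of_character_eq (V := FDRep.of (V.ρ.comp N.subtype))
    (W := FDRep.of (W.ρ.comp N.subtype)) (funext fun n => h n.2)
  obtain ⟨e, he⟩ : ∃ e : V ≃ₗ[k] W, ∀ n : N, W.ρ n = e.conj (V.ρ n) :=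
    let e := FDRep.isoToLinearEquiv i
    ⟨e, FDRep.Iso.conj_ρ i⟩
  obtain ⟨l, hl⟩ := exists_eq_smul_of_eqOn (k := k) (ρ := V.ρ) (N := N)
    (σ := (e.symm.conjRingEquiv : Module.End k W →* Module.End k V).comp W.ρ)
    (fun n hn => by
      change e.symm.conj (W.ρ n) = V.ρ n
      rw [he ⟨n, hn⟩]
      exact e.conj.symm_apply_apply _)
    fun T hT => exists_eq_smul_one_of_simple (ρ := V.ρ.comp N.subtype) fun n => hT n n.2
  refine ⟨l, fun g => ?_⟩
  calc W.character g = LinearMap.trace k V (e.symm.conj (W.ρ g)) :=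
        (LinearMap.trace_conj' _ _).symm
    _ = LinearMap.trace k V (l g • V.ρ g) := congrArg _ (hl g)
    _ = l g * V.character g := map_smul _ _ _

end Characters

section IrreducibleCharacters

variable {G : Type} [Group G]

lemma charDeg_character (V : FDRep ℂ G) : charDeg V.character = Module.finrank ℂ V := by
  simp [charDeg]

lemma monoidHom_mem_irrChar_charDeg_eq_one (l : G →* ℂ) :
    ⇑l ∈ {χ ∈ IrrChar G | charDeg χ = 1} := by
  let ρ : Representation ℂ G ℂ := (algebraMap ℂ (Module.End ℂ ℂ) : ℂ →* Module.End ℂ ℂ).comp l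
  refine ⟨⟨FDRep.of ρ, simple_fdRep_of_finrank_eq_one ρ (Module.finrank_self ℂ), ?_⟩, ?_⟩
  · funext g
    change l g = LinearMap.trace ℂ ℂ (algebraMap ℂ (Module.End ℂ ℂ) (l g))
    simp [Algebra.algebraMap_eq_smul_one]
  · simp [charDeg]

lemma finite_irrChar_charDeg_eq_one [Finite G] : {χ ∈ IrrChar G | charDeg χ = 1}.Finite := by
  have := (linearIndependent_monoidHom G ℂ).finite
  refine (Set.finite_range fun l : G →* ℂ => ⇑l).subset ?_
  rintro _ ⟨⟨V, -, rfl⟩, hdeg⟩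
  have hV : Module.finrank ℂ V = 1 := (charDeg_character V).symm.trans hdeg
  exact ⟨LinearMap.det.comp V.ρ, funext fun g => (trace_eq_det_of_finrank_eq_one hV _).symm⟩

lemma encard_irrChar_restrict_eq_le {N : Subgroup G} [N.Normal] [Finite N] {θ : N → ℂ}
    (hθ : θ ∈ IrrChar N) :
    {χ ∈ IrrChar G | χ ∘ N.subtype = θ}.encard ≤ {χ ∈ IrrChar G | charDeg χ = 1}.encard := by
  rcases Set.eq_empty_or_nonempty {χ ∈ IrrChar G | χ ∘ N.subtype = θ} with
    hempty | ⟨_, ⟨V, -, rfl⟩, hV⟩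
  · rw [hempty]
    simp
  obtain ⟨U, hU, rfl⟩ := hθ
  have : Simple (FDRep.of (V.ρ.comp N.subtype)) := simple_of_character_eq (V := U) hV.symm
  refine (Set.encard_le_encard ?_).trans (Set.encard_image_le (· * V.character) _)
  rintro _ ⟨⟨W, -, rfl⟩, hW⟩
  obtain ⟨l, hl⟩ := exists_character_eq_mul (N := N) (V := V) (W := W)
    fun n hn => congrFun (hV.trans hW.symm) ⟨n, hn⟩
  exact ⟨l, monoidHom_mem_irrChar_charDeg_eq_one l, funext fun g => (hl g).symm⟩

end IrreducibleCharacters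

end Representations

lemma encard_le_mul_encard_of_mapsTo {α β : Type*} {s : Set α} {t : Set β} {f : α → β} {c : ℕ∞}
    (ht : t.Finite) (hf : Set.MapsTo f s t) (hc : ∀ b ∈ t, {a ∈ s | f a = b}.encard ≤ c) :
    s.encard ≤ t.encard * c := by
  have hs : s ⊆ ⋃ b ∈ ht.toFinset, {a ∈ s | f a = b} := fun a ha => by
    simpa [ha] using hf ha
  calc s.encard ≤ ∑ b ∈ ht.toFinset, {a ∈ s | f a = b}.encard :=
        (Set.encard_le_encard hs).trans (Finset.set_encard_biUnion_le _ _)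
    _ ≤ ht.toFinset.card • c :=
        Finset.sum_le_card_nsmul _ _ _ fun b hb => hc b (ht.mem_toFinset.1 hb)
    _ = t.encard * c := by rw [ht.encard_eq_coe_toFinset_card, nsmul_eq_mul]


section PerfectGroupDimensionThree

open Polynomial

variable {K G V : Type*} [Field K] [Group G] [AddCommGroup V] [Module K V]

lemma det_eq_one_of_isPerfect [Group.IsPerfect G] (ρ : Representation K G V) (g : G) :
    LinearMap.det (ρ g) = 1 :=
  DFunLike.congr_fun (eq_one_of_commute (LinearMap.det.comp ρ) fun _ _ => Commute.all _ _) g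

lemma character_eq_of_isConj (ρ : Representation K G V) {g h : G} (hgh : IsConj g h) :
    ρ.character g = ρ.character h := by
  obtain ⟨c, rfl⟩ := isConj_iff.1 hgh
  exact (ρ.char_conj g c).symm

variable [Group.IsPerfect G] [FiniteDimensional K V] {ρ : Representation K G V} {g : G}

lemma charpoly_eq_of_isConj_inv (hV : Module.finrank K V = 3) (hg : IsConj g g⁻¹) :
    (ρ g).charpoly = (X - 1) * (X ^ 2 - C (ρ.character g - 1) * X + 1) := by
  have hmul : ρ g * ρ g⁻¹ = 1 := by rw [← map_mul, mul_inv_cancel, map_one]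
  have htrace : LinearMap.trace K V (ρ g⁻¹) = ρ.character g := (character_eq_of_isConj ρ hg).symm
  rw [charpoly_eq_of_finrank_eq_three hV hmul, det_eq_one_of_isPerfect, one_mul, htrace,
    Representation.character, C_sub, C_1]
  ring

lemma character_sq_of_isConj_inv (hV : Module.finrank K V = 3) (hg : IsConj g g⁻¹) :
    ρ.character (g ^ 2) = ρ.character g ^ 2 - 2 * ρ.character g := by
  have hmul : ρ g * ρ g⁻¹ = 1 := by rw [← map_mul, mul_inv_cancel, map_one]
  have htrace : LinearMap.trace K V (ρ g⁻¹) = ρ.character g := (character_eq_of_isConj ρ hg).symm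
  rw [Representation.character, map_pow, trace_sq_of_finrank_eq_three hV hmul,
    det_eq_one_of_isPerfect, one_mul, htrace, Representation.character]

variable [IsAlgClosed K] [CharZero K]

lemma exists_character_eq_one_add_add_inv (hV : Module.finrank K V = 3) (hg : IsConj g g⁻¹)
    {n : ℕ} [NeZero n] (hgn : g ^ n = 1) (hρg : ρ g ≠ 1) :
    ∃ z : K, z ^ n = 1 ∧ z ≠ 1 ∧ ρ.character g = 1 + z + z⁻¹ :=
  exists_eq_one_add_add_inv_of_charpoly_eq (charpoly_eq_of_isConj_inv hV hg)
    (NeZero.ne (n : K)) (by rw [← map_pow, hgn, map_one]) hρg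

lemma character_of_sq_eq_one (hV : Module.finrank K V = 3) (hg : IsConj g g⁻¹) (hg2 : g ^ 2 = 1)
    (hρg : ρ g ≠ 1) : ρ.character g = -1 := by
  obtain ⟨z, hz, hz1, hχ⟩ := exists_character_eq_one_add_add_inv hV hg hg2 hρg
  obtain rfl := (sq_eq_one_iff.1 hz).resolve_left hz1
  rw [hχ]
  norm_num

lemma character_of_pow_three_eq_one (hV : Module.finrank K V = 3) (hg : IsConj g g⁻¹)
    (hg3 : g ^ 3 = 1) (hρg : ρ g ≠ 1) : ρ.character g = 0 := by
  obtain ⟨z, hz, hz1, hχ⟩ := exists_character_eq_one_add_add_inv hV hg hg3 hρg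
  have hz0 : z ≠ 0 := by rintro rfl; simp at hz
  have hcyclotomic : z ^ 2 + z + 1 = 0 :=
    mul_left_cancel₀ (sub_ne_zero.2 hz1) (by linear_combination hz)
  rw [hχ]
  field_simp
  linear_combination hcyclotomic

lemma character_sq_of_pow_five_eq_one (hV : Module.finrank K V = 3) (hg : IsConj g g⁻¹)
    (hg5 : g ^ 5 = 1) (hρg : ρ g ≠ 1) : ρ.character g ^ 2 = ρ.character g + 1 := by
  obtain ⟨z, hz, hz1, hχ⟩ := exists_character_eq_one_add_add_inv hV hg hg5 hρg
  have hz0 : z ≠ 0 := by rintro rfl; simp at hz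
  have hcyclotomic : z ^ 4 + z ^ 3 + z ^ 2 + z + 1 = 0 :=
    mul_left_cancel₀ (sub_ne_zero.2 hz1) (by linear_combination hz)
  rw [hχ]
  field_simp
  linear_combination hcyclotomic

end PerfectGroupDimensionThree

section AlternatingGroup

local notation "A₅" => alternatingGroup (Fin 5)

/-- A representative of one of the two conjugacy classes of elements of order five of `A₅`; its
square represents the other one. -/
def fiveCycle : A₅ := ⟨finRotate 5, Equiv.Perm.finRotate_bit1_mem_alternatingGroup (n := 2)⟩

/-- The index of the conjugacy class of `g` in a list of the five classes of `A₅`: the identity,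
the involutions, the elements of order three, the conjugates of `fiveCycle` and those of its
square. -/
def classIndex (g : A₅) : Fin 5 :=
  if g = 1 then 0 else if g ^ 2 = 1 then 1 else if g ^ 3 = 1 then 2
  else if ∃ h, h * fiveCycle * h⁻¹ = g then 3 else 4

/-- The class function on `A₅` with values `3, -1, 0, t, 1 - t` on the five conjugacy classes. For
the two roots of `t ^ 2 = t + 1` these are the irreducible characters of degree three. -/
def degreeThreeCharacter {R : Type*} [Ring R] (t : R) (g : A₅) : R :=
  ![3, -1, 0, t, 1 - t] (classIndex g)

instance : Group.IsPerfect A₅ := ⟨commutator_alternatingGroup_eq_top (by simp)⟩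

lemma isConj_inv_alternatingGroup (g : A₅) : IsConj g g⁻¹ := by
  revert g
  simp only [isConj_iff]
  decide +kernel

lemma fiveCycle_ne_one : fiveCycle ≠ 1 := by decide +kernel

lemma fiveCycle_pow_five : fiveCycle ^ 5 = 1 := by decide +kernel

lemma classIndex_inv : ∀ g : A₅, classIndex g⁻¹ = classIndex g := by decide +kernel

lemma exists_conj_fiveCycle_sq : ∀ g : A₅, g ≠ 1 → g ^ 2 ≠ 1 → g ^ 3 ≠ 1 →
    (¬ ∃ h, h * fiveCycle * h⁻¹ = g) → ∃ h, h * fiveCycle ^ 2 * h⁻¹ = g := by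
  decide +kernel

lemma card_classIndex_eq :
    ∀ i, (Finset.univ.filter (classIndex · = i)).card = ![1, 15, 20, 12, 12] i := by
  decide +kernel

lemma sum_degreeThreeCharacter_mul_inv {R : Type*} [CommRing R] {t : R} (ht : t ^ 2 = t + 1) :
    ∑ g : A₅, degreeThreeCharacter t g * degreeThreeCharacter t g⁻¹ = 60 := by
  have hfiber (i : Fin 5) : ∑ g : A₅ with classIndex g = i,
      degreeThreeCharacter t g * degreeThreeCharacter t g⁻¹ =
      ((![1, 15, 20, 12, 12] i : ℕ) : R) * (![3, -1, 0, t, 1 - t] i : R) ^ 2 := by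
    rw [← card_classIndex_eq, ← nsmul_eq_mul]
    refine Finset.sum_eq_card_nsmul fun g hg => ?_
    rw [degreeThreeCharacter, degreeThreeCharacter, classIndex_inv, (Finset.mem_filter.1 hg).2, sq]
  rw [← Finset.sum_fiberwise _ classIndex]
  simp only [hfiber, Fin.sum_univ_five, Matrix.cons_val, Nat.cast_one, Nat.cast_ofNat]
  linear_combination 24 * ht

section DimensionThree

variable {K V : Type*} [Field K] [IsAlgClosed K] [CharZero K] [AddCommGroup V] [Module K V]
  [FiniteDimensional K V] {ρ : Representation K A₅ V}

lemma character_fiveCycle_sq (hV : Module.finrank K V = 3) (hρ : ρ ≠ 1) :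
    ρ.character fiveCycle ^ 2 = ρ.character fiveCycle + 1 :=
  character_sq_of_pow_five_eq_one hV (isConj_inv_alternatingGroup _) fiveCycle_pow_five
    (mt (eq_one_of_map_eq_one hρ) fiveCycle_ne_one)

lemma character_eq_degreeThreeCharacter (hV : Module.finrank K V = 3) (hρ : ρ ≠ 1) :
    ρ.character = degreeThreeCharacter (ρ.character fiveCycle) := by
  funext g
  unfold degreeThreeCharacter classIndex
  split_ifs with hg1 hg2 hg3 hg5
  · simp [hg1, hV]
  · exact character_of_sq_eq_one hV (isConj_inv_alternatingGroup g) hg2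
      (mt (eq_one_of_map_eq_one hρ) hg1)
  · exact character_of_pow_three_eq_one hV (isConj_inv_alternatingGroup g) hg3
      (mt (eq_one_of_map_eq_one hρ) hg1)
  · exact (character_eq_of_isConj ρ (isConj_iff.2 hg5)).symm
  · have hconj : IsConj (fiveCycle ^ 2) g :=
      isConj_iff.2 (exists_conj_fiveCycle_sq g hg1 hg2 hg3 hg5)
    rw [← character_eq_of_isConj ρ hconj,
      character_sq_of_isConj_inv hV (isConj_inv_alternatingGroup _), character_fiveCycle_sq hV hρ]
    simp only [Matrix.cons_val]
    ring

end DimensionThree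

section DirectPower

variable {K V : Type} [Field K] [IsAlgClosed K] [CharZero K] [AddCommGroup V] [Module K V]
  [FiniteDimensional K V]

lemma simple_of_finrank_eq_three {ρ : Representation K A₅ V} (hV : Module.finrank K V = 3)
    (hρ : ρ ≠ 1) : Simple (FDRep.of ρ) := by
  rw [FDRep.simple_iff_char_is_norm_one]
  change ∑ g, ρ.character g * ρ.character g⁻¹ = _
  rw [character_eq_degreeThreeCharacter hV hρ,
    sum_degreeThreeCharacter_mul_inv (character_fiveCycle_sq hV hρ), nat_card_alternatingGroup]
  norm_num [Nat.factorial]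

variable {ι H : Type} [Finite ι] [Group H]

lemma exists_eq_comp_evalMonoidHom_of_finrank_eq_three (e : H ≃* (ι → A₅))
    {ρ : Representation K H V} (hV : Module.finrank K V = 3) (hρ : ρ ≠ 1) :
    ∃ (i : ι) (τ : Representation K A₅ V), τ ≠ 1 ∧
      ρ = τ.comp ((Pi.evalMonoidHom (fun _ => A₅) i).comp e.toMonoidHom) := by
  classical
  let σ : (ι → A₅) →* Module.End K V := ρ.comp e.symm.toMonoidHom
  have hρσ : ρ = σ.comp e.toMonoidHom := by ext; simp [σ]
  obtain ⟨i, hi⟩ := exists_comp_mulSingle_ne_one (f := σ) fun h => hρ (by rw [hρσ, h]; rfl)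
  have := simple_of_finrank_eq_three hV hi
  refine ⟨i, σ.comp (MonoidHom.mulSingle (fun _ => A₅) i), hi, ?_⟩
  rw [hρσ, ← MonoidHom.comp_assoc, ← eq_comp_evalMonoidHom σ i]
  intro x y hx _
  obtain ⟨c, rfl⟩ :=
    exists_eq_smul_one_of_simple (ρ := σ.comp (MonoidHom.mulSingle (fun _ => A₅) i)) hx
  exact (Commute.one_left y).smul_left c

lemma simple_of_mulEquiv_of_finrank_eq_three (e : H ≃* (ι → A₅)) {ρ : Representation K H V}
    (hV : Module.finrank K V = 3) (hρ : ρ ≠ 1) : Simple (FDRep.of ρ) := by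
  obtain ⟨i, τ, hτ, rfl⟩ := exists_eq_comp_evalMonoidHom_of_finrank_eq_three e hV hρ
  have := Finite.of_equiv _ e.symm.toEquiv
  have := simple_of_finrank_eq_three hV hτ
  exact simple_comp_of_surjective ((Function.surjective_eval i).comp e.surjective)

lemma exists_character_eq_degreeThreeCharacter (e : H ≃* (ι → A₅)) {ρ : Representation K H V}
    (hV : Module.finrank K V = 3) (hρ : ρ ≠ 1) :
    ∃ (i : ι) (t : K), t ^ 2 = t + 1 ∧ ρ.character = fun h => degreeThreeCharacter t (e h i) := by
  obtain ⟨i, τ, hτ, rfl⟩ := exists_eq_comp_evalMonoidHom_of_finrank_eq_three e hV hρ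
  exact ⟨i, τ.character fiveCycle, character_fiveCycle_sq hV hτ,
    funext fun h => congrFun (character_eq_degreeThreeCharacter hV hτ) (e h i)⟩

end DirectPower

lemma encard_setOf_sq_eq_add_one_le {R : Type*} [CommRing R] [IsDomain R] :
    {t : R | t ^ 2 = t + 1}.encard ≤ 2 := by
  rcases Set.eq_empty_or_nonempty {t : R | t ^ 2 = t + 1} with hempty | ⟨a, ha : a ^ 2 = a + 1⟩
  · simp [hempty]
  have hsubset : {t : R | t ^ 2 = t + 1} ⊆ {a, 1 - a} := fun t (ht : t ^ 2 = t + 1) => by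
    have hfactor : (t - a) * (t - (1 - a)) = 0 := by linear_combination ht - ha
    simpa [sub_eq_zero] using hfactor
  calc {t : R | t ^ 2 = t + 1}.encard ≤ ({a, 1 - a} : Set R).encard := Set.encard_le_encard hsubset
    _ ≤ ({1 - a} : Set R).encard + 1 := Set.encard_insert_le _ _
    _ = 2 := by rw [Set.encard_singleton, one_add_one_eq_two]

lemma encard_irrChar_charDeg_eq_three_le {ι H : Type} [Finite ι] [Group H]
    (e : H ≃* (ι → A₅)) :
    {θ ∈ IrrChar H | charDeg θ = 3}.encard ≤ 2 * Nat.card ι := by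
  have hsubset : {θ ∈ IrrChar H | charDeg θ = 3} ⊆
      (fun (p : ℂ × ι) h => degreeThreeCharacter p.1 (e h p.2)) ''
        ({t | t ^ 2 = t + 1} ×ˢ Set.univ) := by
    rintro _ ⟨⟨V, hsimple, rfl⟩, hdeg⟩
    have hV : Module.finrank ℂ V = 3 := (charDeg_character V).symm.trans hdeg
    have hρ : V.ρ ≠ 1 := fun hρ => by
      have : Simple (FDRep.of (1 : Representation ℂ H V)) := hρ ▸ hsimple
      have := finrank_eq_one_of_simple_one (k := ℂ) (G := H) (V := V)
      omega
    obtain ⟨i, t, ht, hcharacter⟩ := exists_character_eq_degreeThreeCharacter e hV hρ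
    exact ⟨(t, i), ⟨ht, Set.mem_univ i⟩, hcharacter.symm⟩
  refine (Set.encard_le_encard hsubset).trans ((Set.encard_image_le _ _).trans ?_)
  rw [Set.encard_prod, Set.encard_univ, ENat.card_eq_coe_natCard]
  gcongr
  exact encard_setOf_sq_eq_add_one_le

lemma mapsTo_restrict_irrChar {G ι : Type} [Group G] [Finite ι] {N : Subgroup G}
    (e : N ≃* (ι → A₅)) :
    Set.MapsTo (fun χ : G → ℂ => χ ∘ N.subtype)
      {χ ∈ IrrChar G | charDeg χ = 3 ∧ ∃ n ∈ N, χ n ≠ χ 1} {θ ∈ IrrChar N | charDeg θ = 3} := by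
  rintro _ ⟨⟨V, -, rfl⟩, hdeg, n, hn, hne⟩
  have hV : Module.finrank ℂ V = 3 := (charDeg_character V).symm.trans hdeg
  have hρ : V.ρ.comp N.subtype ≠ 1 := fun hρ => hne <| by
    have hρn : V.ρ n = V.ρ 1 := (DFunLike.congr_fun hρ ⟨n, hn⟩).trans (map_one _).symm
    simp only [FDRep.character, hρn]
  exact ⟨⟨_, simple_of_mulEquiv_of_finrank_eq_three e hV hρ, rfl⟩, hdeg⟩

end AlternatingGroup

theorem card_degree_three_over_N_le_general {G ι : Type} [Group G] [Finite ι]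
    (N : Subgroup G) [N.Normal] (e : N ≃* (ι → alternatingGroup (Fin 5))) :
    {χ ∈ IrrChar G | charDeg χ = 3 ∧ ∃ n ∈ N, χ n ≠ χ 1}.encard ≤
      2 * Nat.card ι * {χ ∈ IrrChar G | charDeg χ = 1}.encard := by
  have : Finite N := Finite.of_equiv _ e.symm.toEquiv
  have hΘ : {θ ∈ IrrChar N | charDeg θ = 3}.encard ≤ 2 * Nat.card ι :=
    encard_irrChar_charDeg_eq_three_le e
  have hfiber (θ : N → ℂ) (hθ : θ ∈ {θ ∈ IrrChar N | charDeg θ = 3}) :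
      {χ ∈ {χ ∈ IrrChar G | charDeg χ = 3 ∧ ∃ n ∈ N, χ n ≠ χ 1} | χ ∘ N.subtype = θ}.encard ≤
        {χ ∈ IrrChar G | charDeg χ = 1}.encard :=
    (encard_irrChar_restrict_eq_le hθ.1).trans' (Set.encard_le_encard fun _ hχ => ⟨hχ.1.1, hχ.2⟩)
  calc _ ≤ {θ ∈ IrrChar N | charDeg θ = 3}.encard * {χ ∈ IrrChar G | charDeg χ = 1}.encard :=
        encard_le_mul_encard_of_mapsTo (Set.finite_of_encard_le_coe hΘ)
          (mapsTo_restrict_irrChar e) hfiber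
    _ ≤ _ := by gcongr

/-- If `N` is a minimal normal subgroup of a finite group `G` isomorphic to a
direct product of `k` copies of `A₅`, then the number of degree-`3` irreducible
characters of `G` whose kernel does not contain `N` is at most `2k` times the
number of linear characters of `G`. -/
theorem card_degree_three_over_N_le (G : Type) [Group G] [Finite G]
    (N : Subgroup G) [N.Normal] (hnt : N ≠ ⊥)
    (hmin : ∀ K : Subgroup G, K.Normal → K ≤ N → K = ⊥ ∨ K = N)
    (k : ℕ) (hiso : Nonempty (N ≃* (Fin k → alternatingGroup (Fin 5)))) :
    ({χ ∈ IrrChar G | charDeg χ = 3 ∧ ∃ n ∈ N, χ n ≠ χ 1} : Set (G → ℂ)).ncard ≤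
      2 * k * ({χ ∈ IrrChar G | charDeg χ = 1} : Set (G → ℂ)).ncard := by
  obtain ⟨e⟩ := hiso
  have h := card_degree_three_over_N_le_general N e
  rw [← finite_irrChar_charDeg_eq_one.cast_ncard_eq, Nat.card_fin] at h
  exact (Set.encard_le_coe_iff_finite_ncard_le.1 (mod_cast h)).2
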